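/- Let η > 0, let ν be a probability measure on ℝ^{d'}, let b : ℝ^d × A × ℝ^{d'} → ℝ^d and r : ℝ^d × A → ℝ be measurable with A compact. Suppose (w̃, ρ̃) with w̃ continuous of at most linear growth solves the ergodic equation ρ̃ = sup_{a∈A} { η ∫ [w̃(x + b(x,a,e)) − w̃(x)] ν(de) + r(x,a) } for all x, and suppose (w̃', ρ̃') is another such solution. If for every admissible control the controlled state satisfies sup_{α} E[|X_t^{x,α}|]/t → 0 as t → ∞, then ρ̃ = ρ̃'. In other words, the ergodic constant in the jump HJB equation is unique among solutions with linear-growth relative value function. -/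

import Mathlib

open MeasureTheory Filter Topology

/-!
Fix `ε > 0` and let the second solution choose, in each state, an action that is `ε`-optimal for its
own equation. Along this stationary feedback `w' - w` has drift at least `ρ' - ε - ρ`, while it
grows at most linearly in the state, whose first moment is sublinear in time; dividing Dynkin's
formula by the time gives `ρ' - ε ≤ ρ`.

Two points need care. A measurable selection of `ε`-optimal actions is available only almost
everywhere for a given reference measure, and it has to be good for the laws that it generates
itself: the feedback is constructed together with a measure `μ` that dominates both the starting
point and its own image under one jump, which forces all time-marginals `Q t` of the state to be
absolutely continuous with respect to `μ`. Integrability of `w'` and `w` along the process is not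
assumed either: since a state is left at rate `η`, the measures `exp (η t) • Q t` increase with `t`,
so an integrable first moment at the final time controls the whole past.
-/

section MeasurableSelection

theorem exists_measurable_mem_of_mem_iUnion {X : Type*} [MeasurableSpace X] {S : ℕ → Set X}
    (hS : ∀ n, MeasurableSet (S n)) :
    ∃ φ : X → ℕ, Measurable φ ∧ ∀ x ∈ ⋃ n, S n, x ∈ S (φ x) := by
  obtain ⟨φ, hφ, hφ_eq⟩ := exists_measurable_piecewise (disjointed S)
    (MeasurableSet.disjointed hS) (fun n _ => n) (fun _ => measurable_const)
    (fun m n hmn x hx => ((disjoint_disjointed S hmn).le_bot hx).elim)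
  refine ⟨φ, hφ, fun x hx => ?_⟩
  obtain ⟨n, hn⟩ := Set.mem_iUnion.1 (iUnion_disjointed (f := S) ▸ hx)
  rw [hφ_eq n hn]
  exact disjointed_subset S n hn

theorem exists_measurable_branch {X : Type*} [MeasurableSpace X] {H : List ℕ → Set X}
    (hH : ∀ s, MeasurableSet (H s)) :
    ∃ σ : X → ℕ → ℕ, Measurable σ ∧ ∀ x ∈ H [],
      (∀ s, x ∈ H s → ∃ n, x ∈ H (n :: s)) → ∀ k, x ∈ H (PiNat.res (σ x) k) := by
  choose child hchild hmem using fun s : List ℕ =>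
    exists_measurable_mem_of_mem_iUnion fun n => hH (n :: s)
  let stem (k : ℕ) (x : X) : List ℕ := (fun s => child s x :: s)^[k] []
  have stem_succ (k : ℕ) (x : X) : stem (k + 1) x = child (stem k x) x :: stem k x :=
    Function.iterate_succ_apply' _ _ _
  let _ : MeasurableSpace (List ℕ) := ⊤
  have measurable_child : Measurable fun p : List ℕ × X => child p.1 p.2 :=
    measurable_from_prod_countable_right hchild
  have measurable_stem (k : ℕ) : Measurable (stem k) := by
    induction k with
    | zero => exact measurable_const
    | succ k ih =>
      simp_rw [funext (stem_succ k)]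
      exact (Measurable.of_discrete (f := fun p : ℕ × List ℕ => p.1 :: p.2)).comp
        ((measurable_child.comp (ih.prodMk measurable_id)).prodMk ih)
  have res_eq_stem (x : X) (k : ℕ) : PiNat.res (fun j => child (stem j x) x) k = stem k x := by
    induction k with
    | zero => rfl
    | succ k ih => rw [PiNat.res_succ, ih, stem_succ]
  refine ⟨fun x j => child (stem j x) x, measurable_pi_lambda _ fun k =>
    measurable_child.comp ((measurable_stem k).prodMk measurable_id), fun x hx hsplit k => ?_⟩
  rw [res_eq_stem]
  induction k with
  | zero => exact hx
  | succ k ih => exact stem_succ k x ▸ hmem _ x (Set.mem_iUnion.2 (hsplit _ ih))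

/-- The basic clopen set of sequences starting with the finite word `s`, the word being listed
from its last letter to its first, as in `PiNat.res`. -/
def wordCylinder (s : List ℕ) : Set (ℕ → ℕ) := {σ | PiNat.res σ s.length = s}

theorem wordCylinder_res (σ : ℕ → ℕ) (k : ℕ) :
    wordCylinder (PiNat.res σ k) = PiNat.cylinder σ k := by
  rw [PiNat.cylinder_eq_res, wordCylinder, PiNat.res_length]

theorem wordCylinder_subset_iUnion_cons (s : List ℕ) :
    wordCylinder s ⊆ ⋃ n, wordCylinder (n :: s) := fun σ hσ =>
  Set.mem_iUnion.2 ⟨σ s.length, show PiNat.res σ (s.length + 1) = _ by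
    rw [PiNat.res_succ, show PiNat.res σ s.length = s from hσ]⟩

theorem hasBasis_nhds_cylinder (σ : ℕ → ℕ) :
    (𝓝 σ).HasBasis (fun _ => True) (PiNat.cylinder σ) := by
  refine ⟨fun U => ⟨fun hU => ?_, fun ⟨k, _, hk⟩ => mem_of_superset
    ((PiNat.isOpen_cylinder _ σ k).mem_nhds (PiNat.self_mem_cylinder σ k)) hk⟩⟩
  obtain ⟨_, ⟨τ, k, rfl⟩, hσ, hU⟩ :=
    (PiNat.isTopologicalBasis_cylinders fun _ => ℕ).mem_nhds_iff.1 hU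
  exact ⟨k, trivial, PiNat.mem_cylinder_iff_eq.1 hσ ▸ hU⟩

theorem eq_of_forall_mem_closure_image_cylinder {X : Type*} [TopologicalSpace X] [T2Space X]
    {g : (ℕ → ℕ) → X} {σ : ℕ → ℕ} (hg : ContinuousAt g σ) {x : X}
    (hx : ∀ k, x ∈ closure (g '' PiNat.cylinder σ k)) : g σ = x := by
  have hcluster : ClusterPt x (map g (𝓝 σ)) :=
    ((hasBasis_nhds_cylinder σ).map g).clusterPt_iff_forall_mem_closure.2 fun k _ => hx k
  have : (𝓝 x ⊓ 𝓝 (g σ)).NeBot := hcluster.mono hg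
  exact (eq_of_nhds_neBot this).symm

/- Replacing each image of a cylinder by a Borel hull inside its closure loses only a null set, and
makes the choice of the branch measurable. -/
theorem exists_measurable_ae_rightInverse {X : Type*} [TopologicalSpace X] [T2Space X]
    [MeasurableSpace X] [OpensMeasurableSpace X] {g : (ℕ → ℕ) → X} (hg : Continuous g)
    (μ : Measure X) [SFinite μ] :
    ∃ σ : X → ℕ → ℕ, Measurable σ ∧ ∀ᵐ x ∂μ, x ∈ Set.range g → g (σ x) = x := by
  let hull (s : List ℕ) : Set X :=
    toMeasurable μ (g '' wordCylinder s) ∩ closure (g '' wordCylinder s)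
  have measurableSet_hull (s : List ℕ) : MeasurableSet (hull s) :=
    (measurableSet_toMeasurable _ _).inter isClosed_closure.measurableSet
  have image_subset_hull (s : List ℕ) : g '' wordCylinder s ⊆ hull s :=
    Set.subset_inter (subset_toMeasurable _ _) subset_closure
  have hull_splits : ∀ᵐ x ∂μ, ∀ s, x ∈ hull s → ∃ n, x ∈ hull (n :: s) := by
    refine ae_all_iff.2 fun s => ?_
    have himage : g '' wordCylinder s ⊆ ⋃ n, hull (n :: s) :=
      (Set.image_mono (wordCylinder_subset_iUnion_cons s)).trans <| by
        rw [Set.image_iUnion]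
        exact Set.iUnion_mono fun n => image_subset_hull _
    have hnull : μ (toMeasurable μ (g '' wordCylinder s) ∩ (⋃ n, hull (n :: s))ᶜ) = 0 := by
      rw [Measure.measure_toMeasurable_inter_of_sFinite
        (MeasurableSet.iUnion fun n => measurableSet_hull _).compl,
        (Set.disjoint_compl_right_iff_subset.2 himage).inter_eq, measure_empty]
    filter_upwards [measure_eq_zero_iff_ae_notMem.1 hnull] with x hx hxs
    by_contra hne
    exact hx ⟨hxs.1, by simpa using hne⟩
  obtain ⟨σ, hσ, hbranch⟩ := exists_measurable_branch measurableSet_hull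
  refine ⟨σ, hσ, ?_⟩
  filter_upwards [hull_splits] with x hx hx_range
  obtain ⟨τ, rfl⟩ := hx_range
  refine eq_of_forall_mem_closure_image_cylinder hg.continuousAt fun k => ?_
  rw [← wordCylinder_res]
  exact (hbranch _ (image_subset_hull _ ⟨τ, rfl, rfl⟩) hx k).2

theorem exists_measurable_ae_mem {X Y : Type*} [MeasurableSpace X] [StandardBorelSpace X]
    [MeasurableSpace Y] [StandardBorelSpace Y] [Nonempty Y] {B : Set (X × Y)}
    (hB : MeasurableSet B) (μ : Measure X) [SFinite μ] :
    ∃ h : X → Y, Measurable h ∧ ∀ᵐ x ∂μ, (∃ y, (x, y) ∈ B) → (x, h x) ∈ B := by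
  let _ := upgradeStandardBorel X
  let _ := upgradeStandardBorel Y
  have analytic_B : AnalyticSet B := hB.analyticSet
  rw [AnalyticSet] at analytic_B
  obtain rfl | ⟨f, hf, rfl⟩ := analytic_B
  · exact ⟨fun _ => Classical.arbitrary Y, measurable_const, by simp⟩
  obtain ⟨σ, hσ, hσ_inv⟩ := exists_measurable_ae_rightInverse (continuous_fst.comp hf) μ
  refine ⟨fun x => (f (σ x)).2, (measurable_snd.comp hf.measurable).comp hσ, ?_⟩
  filter_upwards [hσ_inv] with x hx ⟨y, τ, hτ⟩
  exact ⟨σ x, Prod.ext (hx ⟨τ, congrArg Prod.fst hτ⟩) rfl⟩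

end MeasurableSelection

section Policy

open ProbabilityTheory

variable {X Y : Type*} [MeasurableSpace X] [MeasurableSpace Y]

theorem exists_measurable_eqOn_of_eqOn_succ {α : ℕ → X → Y} (hα : ∀ n, Measurable (α n))
    {G : ℕ → Set X} (hG : ∀ n, MeasurableSet (G n)) (hG_mono : Monotone G)
    (hα_succ : ∀ n, Set.EqOn (α (n + 1)) (α n) (G n)) :
    ∃ β : X → Y, Measurable β ∧ ∀ n, Set.EqOn β (α n) (G n) := by
  have eqOn_of_le {m n : ℕ} (hmn : m ≤ n) : Set.EqOn (α n) (α m) (G m) := by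
    induction n, hmn using Nat.le_induction with
    | base => exact Set.eqOn_refl _ _
    | succ n hmn ih => exact ((hα_succ n).mono (hG_mono hmn)).trans ih
  refine exists_measurable_piecewise G hG α hα fun m n _ x hx => ?_
  rcases le_total m n with hmn | hnm
  · exact (eqOn_of_le hmn hx.1).symm
  · exact eqOn_of_le hnm hx.2

/-- The transition kernel on states obtained from a controlled kernel `K` by playing the stationary
Markov feedback `α`. -/
noncomputable def closedLoop (K : Kernel (X × Y) X) {α : X → Y} (hα : Measurable α) :
    Kernel X X :=
  K.comap (fun x => (x, α x)) (measurable_id.prodMk hα)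

theorem closedLoop_apply (K : Kernel (X × Y) X) {α : X → Y} (hα : Measurable α) (x : X) :
    closedLoop K hα x = K (x, α x) :=
  rfl

instance (K : Kernel (X × Y) X) [IsMarkovKernel K] {α : X → Y} (hα : Measurable α) :
    IsMarkovKernel (closedLoop K hα) :=
  inferInstanceAs (IsMarkovKernel (K.comap _ _))

instance (K : Kernel (X × Y) X) [IsSFiniteKernel K] {α : X → Y} (hα : Measurable α) :
    IsSFiniteKernel (closedLoop K hα) :=
  inferInstanceAs (IsSFiniteKernel (K.comap _ _))

variable [StandardBorelSpace X] [StandardBorelSpace Y] [Nonempty Y] {B : Set (X × Y)}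

theorem exists_measurable_ae_mem_extending (hB : MeasurableSet B) (hB_sec : ∀ x, ∃ y, (x, y) ∈ B)
    {α : X → Y} (hα : Measurable α) (μ : Measure X) [SFinite μ] :
    ∃ β : X → Y, Measurable β ∧ Set.EqOn β α {x | (x, α x) ∈ B} ∧ ∀ᵐ x ∂μ, (x, β x) ∈ B := by
  classical
  obtain ⟨h, hh, hh_mem⟩ := exists_measurable_ae_mem hB μ
  have hgood : MeasurableSet {x | (x, α x) ∈ B} := (measurable_id.prodMk hα) hB
  refine ⟨Set.piecewise {x | (x, α x) ∈ B} α h, hα.piecewise hgood hh,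
    Set.piecewise_eqOn _ _ _, ?_⟩
  filter_upwards [hh_mem] with x hx
  by_cases hxB : (x, α x) ∈ B
  · simp [hxB]
  · simpa [hxB] using hx (hB_sec x)

/- The laws visited after `n` jumps depend on the feedback chosen so far, so feedback and laws are
built together: stage `n + 1` repairs the feedback almost everywhere for the law that stage `n`
produces, keeping its good values. -/
theorem exists_feedback_seq (K : Kernel (X × Y) X) [IsSFiniteKernel K] (hB : MeasurableSet B)
    (hB_sec : ∀ x, ∃ y, (x, y) ∈ B) (m : Measure X) [SFinite m] :
    ∃ (α : ℕ → X → Y) (hα : ∀ n, Measurable (α n)) (μ : ℕ → Measure X), μ 0 = m ∧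
      (∀ n, μ (n + 1) = closedLoop K (hα n) ∘ₘ μ n) ∧
      (∀ n, Set.EqOn (α (n + 1)) (α n) {x | (x, α n x) ∈ B}) ∧
      ∀ n, ∀ᵐ x ∂μ n, (x, α n x) ∈ B := by
  let Stage := {p : (X → Y) × Measure X //
    Measurable p.1 ∧ SFinite p.2 ∧ ∀ᵐ x ∂p.2, (x, p.1 x) ∈ B}
  have exists_next (p : Stage) : ∃ q : Stage,
      q.1.2 = closedLoop K p.2.1 ∘ₘ p.1.2 ∧ Set.EqOn q.1.1 p.1.1 {x | (x, p.1.1 x) ∈ B} := by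
    have : SFinite p.1.2 := p.2.2.1
    obtain ⟨β, hβ, hβ_eq, hβ_mem⟩ := exists_measurable_ae_mem_extending hB hB_sec p.2.1
      (closedLoop K p.2.1 ∘ₘ p.1.2)
    exact ⟨⟨(β, closedLoop K p.2.1 ∘ₘ p.1.2), hβ,
      inferInstanceAs (SFinite (closedLoop K p.2.1 ∘ₘ p.1.2)), hβ_mem⟩, rfl, hβ_eq⟩
  have exists_start : ∃ p : Stage, p.1.2 = m := by
    obtain ⟨α, hα, hα_mem⟩ := exists_measurable_ae_mem hB m
    exact ⟨⟨(α, m), hα, ‹SFinite m›, hα_mem.mono fun x hx => hx (hB_sec x)⟩, rfl⟩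
  choose next hnext_law hnext_eqOn using exists_next
  obtain ⟨p₀, hp₀⟩ := exists_start
  let p (n : ℕ) : Stage := next^[n] p₀
  have p_succ (n : ℕ) : p (n + 1) = next (p n) := Function.iterate_succ_apply' _ _ _
  exact ⟨fun n => (p n).1.1, fun n => (p n).2.1, fun n => (p n).1.2, hp₀,
    fun n => by simp only [p_succ, hnext_law],
    fun n => by simpa only [p_succ] using hnext_eqOn (p n), fun n => (p n).2.2.2⟩

theorem exists_feedback_absolutelyContinuous (K : Kernel (X × Y) X) [IsSFiniteKernel K]
    (hB : MeasurableSet B) (hB_sec : ∀ x, ∃ y, (x, y) ∈ B) (m : Measure X) [SFinite m] :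
    ∃ (α : X → Y) (hα : Measurable α) (μ : Measure X), m ≪ μ ∧ closedLoop K hα ∘ₘ μ ≪ μ ∧
      ∀ᵐ x ∂μ, (x, α x) ∈ B := by
  obtain ⟨α, hα, μ, rfl, hμ_succ, hα_succ, hα_mem⟩ := exists_feedback_seq K hB hB_sec m
  obtain ⟨β, hβ, hβ_eq⟩ := exists_measurable_eqOn_of_eqOn_succ hα
    (G := fun n => {x | (x, α n x) ∈ B}) (fun n => (measurable_id.prodMk (hα n)) hB)
    (monotone_nat_of_le_succ fun n x (hx : _ ∈ B) => show _ ∈ B from (hα_succ n hx).symm ▸ hx)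
    hα_succ
  have closedLoop_comp (n : ℕ) : closedLoop K hβ ∘ₘ μ n = μ (n + 1) := by
    rw [hμ_succ]
    refine Measure.comp_congr ?_
    filter_upwards [hα_mem n] with x hx
    rw [closedLoop_apply, closedLoop_apply, hβ_eq n hx]
  refine ⟨β, hβ, Measure.sum μ, Measure.absolutelyContinuous_sum_right 0 .rfl, ?_, ?_⟩
  · rw [Measure.bind_sum _ _ (Kernel.aemeasurable _)]
    exact Measure.absolutelyContinuous_sum_left fun n =>
      closedLoop_comp n ▸ Measure.absolutelyContinuous_sum_right (n + 1) .rfl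
  · refine Measure.ae_sum_iff.2 fun n => ?_
    filter_upwards [hα_mem n] with x hx
    rw [hβ_eq n hx]
    exact hx

/- The iteration adds, at each step, the points from which the set reached so far is charged. -/
theorem exists_absorbing_of_absolutelyContinuous {X : Type*} [MeasurableSpace X] {κ : Kernel X X}
    {μ : Measure X} (hκ : κ ∘ₘ μ ≪ μ) {M : Set X} (hM : MeasurableSet M) (hμM : μ M = 0) :
    ∃ N, M ⊆ N ∧ MeasurableSet N ∧ μ N = 0 ∧ ∀ x ∉ N, κ x N = 0 := by
  let enlarge (S : Set X) : Set X := S ∪ {x | κ x S ≠ 0}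
  let S (n : ℕ) : Set X := enlarge^[n] M
  have S_succ (n : ℕ) : S (n + 1) = S n ∪ {x | κ x (S n) ≠ 0} := Function.iterate_succ_apply' _ _ _
  have measurableSet_S (n : ℕ) : MeasurableSet (S n) := by
    induction n with
    | zero => exact hM
    | succ n ih =>
      rw [S_succ]
      exact ih.union (κ.measurable_coe ih (measurableSet_singleton 0).compl)
  have null_S (n : ℕ) : μ (S n) = 0 := by
    induction n with
    | zero => exact hμM
    | succ n ih =>
      rw [S_succ, measure_union_null_iff]
      refine ⟨ih, ?_⟩
      have := hκ ih
      rw [Measure.bind_apply (measurableSet_S n) κ.aemeasurable,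
        lintegral_eq_zero_iff (κ.measurable_coe (measurableSet_S n))] at this
      exact this
  refine ⟨⋃ n, S n, Set.subset_iUnion S 0, .iUnion measurableSet_S, measure_iUnion_null null_S,
    fun x hx => measure_iUnion_null fun n => ?_⟩
  by_contra hne
  exact hx (Set.mem_iUnion.2 ⟨n + 1, S_succ n ▸ Or.inr hne⟩)

end Policy

section IntegralComp

open ProbabilityTheory

variable {X Z E : Type*} [MeasurableSpace X] [MeasurableSpace Z] [NormedAddCommGroup E]
  [NormedSpace ℝ E] {κ : Kernel Z X} {μ : Measure Z} {f : X → E}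

theorem integral_comp_measure (hf : Integrable f (κ ∘ₘ μ)) :
    ∫ x, f x ∂(κ ∘ₘ μ) = ∫ z, ∫ x, f x ∂κ z ∂μ := by
  rw [Measure.comp_eq_comp_const_apply] at hf ⊢
  rw [Kernel.integral_comp hf, Kernel.const_apply]

theorem integrable_integral_of_integrable_comp (hf : Integrable f (κ ∘ₘ μ)) :
    Integrable (fun z => ∫ x, f x ∂κ z) μ := by
  rw [Measure.comp_eq_comp_const_apply] at hf
  simpa only [Kernel.const_apply] using hf.integral_comp

theorem norm_integral_le_of_forall_norm_le {μ : Measure X} [IsProbabilityMeasure μ] {C : ℝ}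
    (hf : ∀ x, ‖f x‖ ≤ C) : ‖∫ x, f x ∂μ‖ ≤ C := by
  simpa using norm_integral_le_of_norm_le_const (μ := μ) (Eventually.of_forall hf)

end IntegralComp

section JumpGenerator

open ProbabilityTheory

variable {X : Type*} [MeasurableSpace X] {κ : Kernel X X} {f g : X → ℝ}

/-- The generator of the pure-jump process that jumps at unit rate with transition kernel `κ`. The
difference is kept inside the integral, so that the value depends on `f` only up to an additive
constant even where `f` is not `κ x`-integrable. -/
noncomputable def jumpGenerator (κ : Kernel X X) (f : X → ℝ) (x : X) : ℝ :=
  ∫ y, (f y - f x) ∂κ x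

theorem stronglyMeasurable_jumpGenerator [IsSFiniteKernel κ] (hf : StronglyMeasurable f) :
    StronglyMeasurable (jumpGenerator κ f) := by
  have : StronglyMeasurable fun p : X × X => f p.2 - f p.1 :=
    (hf.comp_measurable measurable_snd).sub (hf.comp_measurable measurable_fst)
  exact this.integral_kernel_prod_right'

variable [IsMarkovKernel κ]

theorem jumpGenerator_eq_integral_sub {x : X} (hf : Integrable f (κ x)) :
    jumpGenerator κ f x = ∫ y, f y ∂κ x - f x := by
  simp [jumpGenerator, integral_sub hf (integrable_const (f x))]

theorem jumpGenerator_sub {x : X} (hf : Integrable f (κ x)) (hg : Integrable g (κ x)) :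
    jumpGenerator κ (f - g) x = jumpGenerator κ f x - jumpGenerator κ g x := by
  rw [jumpGenerator_eq_integral_sub (hf.sub hg), jumpGenerator_eq_integral_sub hf,
    jumpGenerator_eq_integral_sub hg, integral_sub' hf hg, Pi.sub_apply]
  ring

theorem norm_jumpGenerator_le {C : ℝ} (hC : ∀ y, ‖f y‖ ≤ C) (x : X) :
    ‖jumpGenerator κ f x‖ ≤ 2 * C :=
  norm_integral_le_of_forall_norm_le fun y =>
    (norm_sub_le _ _).trans (by linarith [hC x, hC y])

theorem neg_le_jumpGenerator (hf : ∀ y, 0 ≤ f y) (x : X) : -f x ≤ jumpGenerator κ f x := by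
  by_cases hint : Integrable f (κ x)
  · rw [jumpGenerator_eq_integral_sub hint]
    linarith [integral_nonneg (μ := κ x) (f := f) hf]
  · have : ¬Integrable (fun y => f y - f x) (κ x) := fun h =>
      hint (by simpa only [sub_eq_add_neg, integrable_add_const_iff] using h)
    rw [jumpGenerator, integral_undef this]
    linarith [hf x]

variable {μ : Measure X}

theorem integrable_jumpGenerator (hf : Integrable f μ) (hκf : Integrable f (κ ∘ₘ μ)) :
    Integrable (jumpGenerator κ f) μ := by
  refine ((integrable_integral_of_integrable_comp hκf).sub hf).congr ?_
  filter_upwards [Measure.ae_integrable_of_integrable_comp hκf] with x hx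
  exact (jumpGenerator_eq_integral_sub hx).symm

theorem integral_jumpGenerator (hf : Integrable f μ) (hκf : Integrable f (κ ∘ₘ μ)) :
    ∫ x, jumpGenerator κ f x ∂μ = ∫ x, f x ∂(κ ∘ₘ μ) - ∫ x, f x ∂μ := by
  rw [integral_comp_measure hκf, ← integral_sub (integrable_integral_of_integrable_comp hκf) hf]
  refine integral_congr_ae ?_
  filter_upwards [Measure.ae_integrable_of_integrable_comp hκf] with x hx
  exact jumpGenerator_eq_integral_sub hx

end JumpGenerator

section ForwardEquation

open ProbabilityTheory

open scoped NNReal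

variable {X : Type*} [MeasurableSpace X] {Q : Kernel ℝ X}

/-- The occupation measure on `[0, t]` of a process with time-marginal laws `Q`. -/
noncomputable def occupation (Q : Kernel ℝ X) (t : ℝ) : Measure X :=
  Q ∘ₘ volume.restrict (Set.Ioc 0 t)

instance [IsFiniteKernel Q] (t : ℝ) : IsFiniteMeasure (occupation Q t) :=
  inferInstanceAs (IsFiniteMeasure (Q ∘ₘ _))

theorem occupation_apply (Q : Kernel ℝ X) (t : ℝ) {S : Set X} (hS : MeasurableSet S) :
    occupation Q t S = ∫⁻ s in Set.Ioc 0 t, Q s S :=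
  Measure.bind_apply hS Q.aemeasurable

theorem integral_occupation {t : ℝ} (ht : 0 ≤ t) {f : X → ℝ} (hf : Integrable f (occupation Q t)) :
    ∫ x, f x ∂occupation Q t = ∫ s in 0..t, ∫ x, f x ∂Q s := by
  rw [intervalIntegral.integral_of_le ht]
  exact integral_comp_measure hf

theorem real_univ_occupation [IsMarkovKernel Q] {t : ℝ} (ht : 0 ≤ t) :
    (occupation Q t).real Set.univ = t := by
  rw [measureReal_def, occupation_apply _ _ .univ]
  simp [ht]

theorem intervalIntegrable_integral_kernel [IsMarkovKernel Q] {f : X → ℝ}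
    (hf : StronglyMeasurable f) {C : ℝ} (hC : ∀ x, ‖f x‖ ≤ C) (a b : ℝ) :
    IntervalIntegrable (fun s => ∫ x, f x ∂Q s) volume a b :=
  (intervalIntegrable_const (c := C)).mono_fun hf.integral_kernel.aestronglyMeasurable <|
    Eventually.of_forall fun _ =>
      (norm_integral_le_of_forall_norm_le hC).trans (le_abs_self C)

/-- The Kolmogorov forward equation, integrated in time, for the time-marginal laws `Q` of the
process started from `x` that jumps at rate `η` with transition kernel `κ`. The loss term stands on
the left, so that all terms are measures. -/
def ForwardEquation (η : ℝ≥0) (κ : Kernel X X) (x : X) (Q : Kernel ℝ X) : Prop :=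
  ∀ t, 0 ≤ t → Q t + η • occupation Q t = Measure.dirac x + η • (κ ∘ₘ occupation Q t)

namespace ForwardEquation

variable {η : ℝ≥0} {κ : Kernel X X} [IsMarkovKernel κ] {x : X} {f : X → ℝ} {s t : ℝ}

theorem integral_eq_add_occupation (h : ForwardEquation η κ x Q) (ht : 0 ≤ t)
    (hf : StronglyMeasurable f) (hf_int : Integrable f (Q t))
    (hf_occ : Integrable f (occupation Q t)) (hf_comp : Integrable f (κ ∘ₘ occupation Q t)) :
    ∫ y, f y ∂Q t = f x + η * ∫ y, jumpGenerator κ f y ∂occupation Q t := by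
  have hf_dirac : Integrable f (Measure.dirac x) := integrable_dirac' hf (by simp)
  have hint := congrArg (fun μ => ∫ y, f y ∂μ) (h t ht)
  simp only [integral_add_measure hf_int hf_occ.smul_measure_nnreal,
    integral_add_measure hf_dirac hf_comp.smul_measure_nnreal, integral_smul_nnreal_measure,
    integral_dirac' _ _ hf, NNReal.smul_def, smul_eq_mul] at hint
  rw [integral_jumpGenerator hf_occ hf_comp]
  linarith

variable [IsMarkovKernel Q]

section Bounded

variable {C : ℝ}

theorem integral_eq_add_intervalIntegral (h : ForwardEquation η κ x Q) (hf : StronglyMeasurable f)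
    (hC : ∀ y, ‖f y‖ ≤ C) (ht : 0 ≤ t) :
    ∫ y, f y ∂Q t = f x + η * ∫ s in 0..t, ∫ y, jumpGenerator κ f y ∂Q s := by
  have integrable_of_bounded (μ : Measure X) [IsFiniteMeasure μ] : Integrable f μ :=
    .of_bound hf.aestronglyMeasurable C (Eventually.of_forall hC)
  rw [h.integral_eq_add_occupation ht hf (integrable_of_bounded _) (integrable_of_bounded _)
    (integrable_of_bounded _), integral_occupation ht
    (integrable_jumpGenerator (integrable_of_bounded _) (integrable_of_bounded _))]

theorem continuousOn_integral (h : ForwardEquation η κ x Q) (hf : StronglyMeasurable f)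
    (hC : ∀ y, ‖f y‖ ≤ C) : ContinuousOn (fun t => ∫ y, f y ∂Q t) (Set.Ici 0) := by
  have hcont : Continuous fun t => f x + η * ∫ s in 0..t, ∫ y, jumpGenerator κ f y ∂Q s :=
    continuous_const.add <| continuous_const.mul <| intervalIntegral.continuous_primitive
      (intervalIntegrable_integral_kernel (stronglyMeasurable_jumpGenerator hf)
        (norm_jumpGenerator_le hC)) 0
  exact hcont.continuousOn.congr fun t ht => h.integral_eq_add_intervalIntegral hf hC ht

theorem hasDerivAt_integral (h : ForwardEquation η κ x Q) (hf : StronglyMeasurable f)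
    (hC : ∀ y, ‖f y‖ ≤ C) (ht : 0 < t) :
    HasDerivAt (fun t => ∫ y, f y ∂Q t) (η * ∫ y, jumpGenerator κ f y ∂Q t) t := by
  have hAf := stronglyMeasurable_jumpGenerator (κ := κ) hf
  have hAf_bound := norm_jumpGenerator_le (κ := κ) hC
  have hderiv := intervalIntegral.integral_hasDerivAt_right
    (intervalIntegrable_integral_kernel hAf hAf_bound 0 t)
    (hAf.integral_kernel (κ := Q)).stronglyMeasurableAtFilter
    ((h.continuousOn_integral hAf hAf_bound).continuousAt (Ici_mem_nhds ht))
  refine ((hderiv.const_mul (η : ℝ)).const_add (f x)).congr_of_eventuallyEq ?_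
  filter_upwards [Ici_mem_nhds ht] with s hs
  exact h.integral_eq_add_intervalIntegral hf hC hs

/- Between jumps mass leaves a state at rate at most `η`. -/
theorem monotoneOn_exp_mul_integral (h : ForwardEquation η κ x Q) (hf : StronglyMeasurable f)
    (hC : ∀ y, ‖f y‖ ≤ C) (hf_nonneg : ∀ y, 0 ≤ f y) :
    MonotoneOn (fun t => Real.exp (η * t) * ∫ y, f y ∂Q t) (Set.Ici 0) := by
  refine monotoneOn_of_hasDerivWithinAt_nonneg (convex_Ici 0)
    (f' := fun t => Real.exp (η * t) * (η * (∫ y, f y ∂Q t + ∫ y, jumpGenerator κ f y ∂Q t)))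
    (.mul (by fun_prop) (h.continuousOn_integral hf hC)) (fun t ht => ?_) fun t _ => ?_
  · rw [interior_Ici] at ht
    have hexp : HasDerivAt (fun t : ℝ => Real.exp (η * t)) (Real.exp (η * t) * η) t := by
      simpa using ((hasDerivAt_id t).const_mul (η : ℝ)).exp
    exact ((hexp.mul (h.hasDerivAt_integral hf hC ht)).congr_deriv (by ring)).hasDerivWithinAt
  · have hf_int : Integrable f (Q t) :=
      .of_bound hf.aestronglyMeasurable C (Eventually.of_forall hC)
    have hAf_int : Integrable (jumpGenerator κ f) (Q t) :=
      .of_bound (stronglyMeasurable_jumpGenerator hf).aestronglyMeasurable (2 * C)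
        (Eventually.of_forall (norm_jumpGenerator_le hC))
    have : 0 ≤ ∫ y, f y ∂Q t + ∫ y, jumpGenerator κ f y ∂Q t := by
      rw [← integral_add hf_int hAf_int]
      exact integral_nonneg fun y => neg_le_iff_add_nonneg'.1 (neg_le_jumpGenerator hf_nonneg y)
    positivity

end Bounded

theorem le_smul (h : ForwardEquation η κ x Q) (hs : 0 ≤ s) (hst : s ≤ t) :
    Q s ≤ ENNReal.ofReal (Real.exp (η * t)) • Q t := by
  refine Measure.le_iff.2 fun S hS => ?_
  have hmono := h.monotoneOn_exp_mul_integral (stronglyMeasurable_one.indicator hS) (C := 1)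
    (fun y => (norm_indicator_le_norm_self _ _).trans (by simp))
    (Set.indicator_nonneg (by simp)) hs (hs.trans hst) hst
  simp only [integral_indicator_one hS] at hmono
  have hreal : (Q s).real S ≤ Real.exp (η * t) * (Q t).real S :=
    (le_mul_of_one_le_left measureReal_nonneg (Real.one_le_exp (by positivity))).trans hmono
  rw [Measure.smul_apply, smul_eq_mul, ← ofReal_measureReal (μ := Q s),
    ← ofReal_measureReal (μ := Q t), ← ENNReal.ofReal_mul (Real.exp_pos _).le]
  exact ENNReal.ofReal_le_ofReal hreal

theorem occupation_le_smul (h : ForwardEquation η κ x Q) (t : ℝ) :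
    occupation Q t ≤ (ENNReal.ofReal (Real.exp (η * t)) * ENNReal.ofReal t) • Q t := by
  refine Measure.le_iff.2 fun S hS => ?_
  rw [occupation_apply _ _ hS]
  calc ∫⁻ s in Set.Ioc 0 t, Q s S
      ≤ ∫⁻ _ in Set.Ioc 0 t, ENNReal.ofReal (Real.exp (η * t)) * Q t S :=
        setLIntegral_mono' measurableSet_Ioc fun s hs => h.le_smul hs.1.le hs.2 S
    _ = _ := by
        rw [setLIntegral_const, Real.volume_Ioc, sub_zero, Measure.smul_apply, smul_eq_mul]
        ring

theorem integrable_occupation (h : ForwardEquation η κ x Q) (hf : Integrable f (Q t)) :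
    Integrable f (occupation Q t) :=
  (hf.smul_measure (by finiteness)).mono_measure (h.occupation_le_smul t)

theorem integrable_comp_occupation (h : ForwardEquation η κ x Q) (hη : η ≠ 0) (ht : 0 ≤ t)
    (hf : Integrable f (Q t)) : Integrable f (κ ∘ₘ occupation Q t) := by
  have hsum : Integrable f (Q t + η • occupation Q t) :=
    hf.add_measure (h.integrable_occupation hf).smul_measure_nnreal
  rw [h t ht] at hsum
  exact (integrable_smul_measure (by simpa using hη) ENNReal.coe_ne_top).1
    hsum.right_of_add_measure

theorem dynkin (h : ForwardEquation η κ x Q) (hη : η ≠ 0) (ht : 0 ≤ t)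
    (hf : StronglyMeasurable f) (hf_int : Integrable f (Q t)) :
    ∫ y, f y ∂Q t = f x + η * ∫ y, jumpGenerator κ f y ∂occupation Q t :=
  h.integral_eq_add_occupation ht hf hf_int (h.integrable_occupation hf_int)
    (h.integrable_comp_occupation hη ht hf_int)

theorem apply_eq_zero_of_absorbing (h : ForwardEquation η κ x Q) (ht : 0 ≤ t) {N : Set X}
    (hN : MeasurableSet N) (hxN : x ∉ N) (hκN : ∀ y ∉ N, κ y N = 0) : Q t N = 0 := by
  have kernel_le (y : X) : κ y N ≤ N.indicator 1 y := by
    by_cases hy : y ∈ N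
    · simpa [hy] using prob_le_one
    · simp [hy, hκN y hy]
  have comp_le : (κ ∘ₘ occupation Q t) N ≤ occupation Q t N := by
    rw [Measure.bind_apply hN κ.aemeasurable, ← lintegral_indicator_one hN]
    exact lintegral_mono kernel_le
  have hfwd := congrArg (fun μ => μ N) (h t ht)
  simp only [Measure.add_apply, Measure.smul_apply, Measure.dirac_apply' x hN,
    Set.indicator_of_notMem hxN, zero_add] at hfwd
  have hle : Q t N + η • occupation Q t N ≤ 0 + η • occupation Q t N := by
    rw [hfwd, zero_add]
    gcongr
  exact nonpos_iff_eq_zero.1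
    ((ENNReal.add_le_add_iff_right (measure_ne_top (η • occupation Q t) N)).1 hle)

theorem absolutelyContinuous (h : ForwardEquation η κ x Q) (ht : 0 ≤ t) {μ : Measure X}
    (hxμ : Measure.dirac x ≪ μ) (hκμ : κ ∘ₘ μ ≪ μ) : Q t ≪ μ := by
  refine Measure.AbsolutelyContinuous.mk fun M hM hμM => ?_
  obtain ⟨N, hMN, hN, hμN, hκN⟩ := exists_absorbing_of_absolutelyContinuous hκμ hM hμM
  have hxN : x ∉ N := by simpa [Measure.dirac_apply' x hN] using hxμ hμN
  exact measure_mono_null hMN (h.apply_eq_zero_of_absorbing ht hN hxN hκN)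

theorem occupation_absolutelyContinuous (h : ForwardEquation η κ x Q) (t : ℝ) {μ : Measure X}
    (hxμ : Measure.dirac x ≪ μ) (hκμ : κ ∘ₘ μ ≪ μ) : occupation Q t ≪ μ := by
  refine Measure.AbsolutelyContinuous.mk fun N hN hμN => ?_
  rw [occupation_apply _ _ hN, setLIntegral_congr_fun measurableSet_Ioc
    fun s hs => h.absolutelyContinuous hs.1.le hxμ hκμ hμN, lintegral_zero]

end ForwardEquation

end ForwardEquation

section JumpFlow

open ProbabilityTheory

open scoped NNReal BoundedContinuousFunction

theorem measurable_intervalIntegral_max {E : Type*} [NormedAddCommGroup E] [NormedSpace ℝ E]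
    [MeasurableSpace E] [BorelSpace E] (f : ℝ → E) (a : ℝ) :
    Measurable fun t => ∫ s in a..max t a, f s := by
  classical
  let J : Set ℝ := {t | IntervalIntegrable f volume a (max t a)}
  have mem_of_le {t : ℝ} (ht : t ∈ J) {s : ℝ} (hst : s ≤ t) : s ∈ J := by
    refine IntervalIntegrable.mono_set (a := a) (b := max t a) ht ?_
    rw [Set.uIcc_of_le (le_max_right _ _), Set.uIcc_of_le (le_max_right _ _)]
    exact Set.Icc_subset_Icc_right (max_le_max_right a hst)
  have hJ : MeasurableSet J :=
    Set.OrdConnected.measurableSet ⟨fun _ _ _ ht _ hs => mem_of_le ht hs.2⟩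
  have continuousOn_Iic {t : ℝ} (ht : t ∈ J) :
      ContinuousOn (fun t => ∫ s in a..max t a, f s) (Set.Iic t) := by
    refine (intervalIntegral.continuousOn_primitive_interval' ht Set.left_mem_uIcc).comp
      (f := fun t => max t a) (by fun_prop) fun s hs => ?_
    rw [Set.uIcc_of_le (le_max_right _ _)]
    exact ⟨le_max_right _ _, max_le_max_right a hs⟩
  have hcont : ContinuousOn (fun t => ∫ s in a..max t a, f s) J := fun t ht => by
    by_cases hmax : ∃ t' ∈ J, t < t'
    · obtain ⟨t', ht', htt'⟩ := hmax
      exact ((continuousOn_Iic ht').continuousAt (Iic_mem_nhds htt')).continuousWithinAt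
    · push Not at hmax
      exact (continuousOn_Iic ht t Set.self_mem_Iic).mono hmax
  convert hcont.measurable_piecewise (continuousOn_const (c := (0 : E))) hJ using 1
  ext t
  by_cases ht : t ∈ J
  · simp [ht]
  · rw [Set.piecewise_eq_of_notMem _ _ _ ht]
    exact intervalIntegral.integral_undef ht

variable {X : Type*} [MeasurableSpace X] [TopologicalSpace X]

theorem measurable_measure_of_forall_measurable_lintegral [HasOuterApproxClosed X] [BorelSpace X]
    {ι : Type*} [MeasurableSpace ι] {P : ι → Measure X} [∀ i, IsProbabilityMeasure (P i)]
    (hP : ∀ f : X →ᵇ ℝ≥0, Measurable fun i => ∫⁻ x, f x ∂P i) : Measurable P := by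
  refine Measurable.measure_of_isPiSystem_of_isProbabilityMeasure
    (BorelSpace.measurable_eq.trans borel_eq_generateFrom_isClosed) isPiSystem_isClosed
    fun F (hF : IsClosed F) => ?_
  exact measurable_of_tendsto_metrizable (fun n => hP (hF.apprSeq n)) <|
    tendsto_pi_nhds.2 fun i => HasOuterApproxClosed.tendsto_lintegral_apprSeq hF (P i)

variable {η : ℝ≥0} {κ : Kernel X X} {x : X}

theorem ForwardEquation.of_forall_integral_eq [HasOuterApproxClosed X] [BorelSpace X]
    [IsMarkovKernel κ] {Q : Kernel ℝ X} [IsMarkovKernel Q]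
    (h : ∀ (f : X →ᵇ ℝ) (t : ℝ), 0 ≤ t →
      ∫ y, f y ∂Q t = f x + η * ∫ s in 0..t, ∫ y, jumpGenerator κ f y ∂Q s) :
    ForwardEquation η κ x Q := by
  refine fun t ht => ext_of_forall_integral_eq_of_IsFiniteMeasure fun f => ?_
  rw [integral_add_measure (f.integrable _) (f.integrable _),
    integral_add_measure (f.integrable _) (f.integrable _), integral_smul_nnreal_measure,
    integral_smul_nnreal_measure, integral_dirac' _ _ f.continuous.stronglyMeasurable, h f t ht,
    ← integral_occupation ht (integrable_jumpGenerator (f.integrable _) (f.integrable _)),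
    integral_jumpGenerator (f.integrable _) (f.integrable _)]
  simp only [NNReal.smul_def, smul_eq_mul]
  ring

/-- The measures `P t`, for `0 ≤ t`, behave as the time-marginal laws of the process started from
`x` that jumps at rate `η` with transition kernel `κ`: they satisfy Dynkin's formula for the
continuous functions dominated by the weight `V`. Both the integrability of these functions and the
measurability of `P` are consequences rather than assumptions. -/
structure IsJumpFlow (η : ℝ≥0) (κ : Kernel X X) (V : X → ℝ) (x : X) (P : ℝ → Measure X) :
    Prop where
  isProbabilityMeasure (t : ℝ) : IsProbabilityMeasure (P t)
  dynkin (w : X → ℝ) : Continuous w → (∃ M, ∀ y, |w y| ≤ M * V y) → ∀ t, 0 ≤ t →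
    ∫ y, w y ∂P t = w x + η * ∫ s in 0..t, ∫ y, jumpGenerator κ w y ∂P s

namespace IsJumpFlow

variable {V : X → ℝ} {P : ℝ → Measure X} {t : ℝ}

theorem dynkin_of_bounded (h : IsJumpFlow η κ V x P) (hV : ∀ y, 1 ≤ V y) (f : X →ᵇ ℝ)
    (ht : 0 ≤ t) :
    ∫ y, f y ∂P t = f x + η * ∫ s in 0..t, ∫ y, jumpGenerator κ f y ∂P s := by
  refine h.dynkin f f.continuous ⟨‖f‖, fun y => (f.norm_coe_le_norm y).trans ?_⟩ t ht
  exact le_mul_of_one_le_right (norm_nonneg f) (hV y)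

/- If `V` were not integrable, then neither would `V + 1` be; both integrals would take the default
value `0`, while Dynkin's formula makes them differ by `1`. -/
theorem integrable_weight (h : IsJumpFlow η κ V x P) (hV_cont : Continuous V)
    (hV : ∀ y, 1 ≤ V y) (ht : 0 ≤ t) : Integrable V (P t) := by
  have := h.isProbabilityMeasure t
  by_contra hV_int
  have hV1_int : ¬Integrable (fun y => V y + 1) (P t) := by
    simpa only [integrable_add_const_iff] using hV_int
  have hdyn := h.dynkin V hV_cont
    ⟨1, fun y => by rw [one_mul, abs_of_nonneg (zero_le_one.trans (hV y))]⟩ t ht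
  have hdyn1 := h.dynkin (fun y => V y + 1) (by fun_prop)
    ⟨2, fun y => abs_le.2 ⟨by linarith [hV y], by linarith [hV y]⟩⟩ t ht
  have hgen : jumpGenerator κ (fun y => V y + 1) = jumpGenerator κ V := by
    ext y
    simp only [jumpGenerator, add_sub_add_right_eq_sub]
  rw [integral_undef hV_int] at hdyn
  rw [integral_undef hV1_int, hgen] at hdyn1
  linarith

variable [HasOuterApproxClosed X] [BorelSpace X]

theorem measurable_max_zero (h : IsJumpFlow η κ V x P) (hV : ∀ y, 1 ≤ V y) :
    Measurable fun t => P (max t 0) := by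
  have (t : ℝ) := h.isProbabilityMeasure (max t 0)
  refine measurable_measure_of_forall_measurable_lintegral fun f => ?_
  let g : X →ᵇ ℝ := f.comp _ isometry_subtype_coe.lipschitz
  have lintegral_eq (t : ℝ) : ∫⁻ y, f y ∂P (max t 0) = ENNReal.ofReal (∫ y, g y ∂P (max t 0)) := by
    rw [ofReal_integral_eq_lintegral_ofReal (g.integrable _) (ae_of_all _ fun y => (f y).2)]
    exact lintegral_congr fun y => ENNReal.ofReal_coe_nnreal.symm
  simp_rw [lintegral_eq, fun t => h.dynkin_of_bounded hV g (le_max_right t 0)]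
  exact (((measurable_intervalIntegral_max _ 0).const_mul _).const_add _).ennreal_ofReal

theorem exists_forwardEquation [IsMarkovKernel κ] (h : IsJumpFlow η κ V x P)
    (hV : ∀ y, 1 ≤ V y) :
    ∃ Q : Kernel ℝ X, IsMarkovKernel Q ∧ (∀ t, 0 ≤ t → Q t = P t) ∧ ForwardEquation η κ x Q := by
  let Q : Kernel ℝ X := ⟨fun t => P (max t 0), h.measurable_max_zero hV⟩
  have hQ : IsMarkovKernel Q := ⟨fun t => h.isProbabilityMeasure (max t 0)⟩
  have hQP (t : ℝ) (ht : 0 ≤ t) : Q t = P t := congrArg P (max_eq_left ht)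
  refine ⟨Q, hQ, hQP, .of_forall_integral_eq fun f t ht => ?_⟩
  rw [hQP t ht, h.dynkin_of_bounded hV f ht]
  congr 2
  refine intervalIntegral.integral_congr fun s hs => ?_
  rw [Set.uIcc_of_le ht] at hs
  simp only [hQP s hs.1]

end IsJumpFlow

end JumpFlow

section Verification

open ProbabilityTheory

open scoped NNReal

theorem nonpos_of_forall_mul_le {δ M C : ℝ} {v : ℝ → ℝ}
    (hv : Tendsto (fun t => v t / t) atTop (𝓝 0)) (h : ∀ t, 0 < t → δ * t ≤ M * v t + C) :
    δ ≤ 0 := by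
  have hlim : Tendsto (fun t => M * (v t / t) + C / t) atTop (𝓝 0) := by
    simpa using (hv.const_mul M).add (tendsto_const_nhds.div_atTop tendsto_id)
  refine ge_of_tendsto hlim ?_
  filter_upwards [eventually_gt_atTop 0] with t ht
  rw [← mul_div_assoc, ← add_div, le_div_iff₀ ht]
  exact h t ht

theorem tendsto_integral_one_add_div {Ω : Type*} [MeasurableSpace Ω] {μ : ℝ → Measure Ω}
    [∀ t, IsProbabilityMeasure (μ t)] {f : Ω → ℝ} (hf : ∀ ω, 0 ≤ f ω)
    (h : Tendsto (fun t => (∫ ω, f ω ∂μ t) / t) atTop (𝓝 0)) :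
    Tendsto (fun t => (∫ ω, (1 + f ω) ∂μ t) / t) atTop (𝓝 0) := by
  have integral_le (t : ℝ) : ∫ ω, (1 + f ω) ∂μ t ≤ 1 + ∫ ω, f ω ∂μ t := by
    by_cases hint : Integrable f (μ t)
    · simp [integral_add (integrable_const 1) hint]
    · rw [integral_undef (by simpa only [integrable_const_add_iff] using hint)]
      linarith [integral_nonneg (μ := μ t) (f := f) hf]
  have hlim : Tendsto (fun t => 1 / t + (∫ ω, f ω ∂μ t) / t) atTop (𝓝 0) := by
    simpa using ((tendsto_const_nhds (x := (1 : ℝ))).div_atTop tendsto_id).add h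
  refine squeeze_zero' ?_ ?_ hlim
  · filter_upwards [eventually_gt_atTop 0] with t ht
    exact div_nonneg (integral_nonneg fun ω => add_nonneg zero_le_one (hf ω)) ht.le
  · filter_upwards [eventually_gt_atTop 0] with t ht
    rw [← add_div]
    gcongr
    exact integral_le t

variable {X : Type*} [MeasurableSpace X] {η : ℝ≥0} {x : X}

theorem ForwardEquation.mul_le_integral_sub {κ : Kernel X X} [IsMarkovKernel κ] {Q : Kernel ℝ X}
    [IsMarkovKernel Q] (h : ForwardEquation η κ x Q) (hη : η ≠ 0) {t : ℝ} (ht : 0 ≤ t) {u : X → ℝ}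
    (hu : StronglyMeasurable u) (hu_int : Integrable u (Q t)) {δ : ℝ}
    (hδ : ∀ᵐ y ∂occupation Q t, δ ≤ η * jumpGenerator κ u y) :
    δ * t ≤ ∫ y, u y ∂Q t - u x := by
  have hgen_int : Integrable (jumpGenerator κ u) (occupation Q t) :=
    integrable_jumpGenerator (h.integrable_occupation hu_int)
      (h.integrable_comp_occupation hη ht hu_int)
  calc δ * t = ∫ _, δ ∂occupation Q t := by
        rw [integral_const, real_univ_occupation ht, smul_eq_mul, mul_comm]
    _ ≤ ∫ y, η * jumpGenerator κ u y ∂occupation Q t :=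
        integral_mono_ae (integrable_const δ) (hgen_int.const_mul _) hδ
    _ = ∫ y, u y ∂Q t - u x := by
        rw [integral_const_mul, h.dynkin hη ht hu hu_int, add_sub_cancel_left]

variable {Y : Type*} [MeasurableSpace Y] {K : Kernel (X × Y) X} {r : X × Y → ℝ}

/-- The expression maximised over the actions in the ergodic equation, for the process that jumps
at rate `η` with controlled transition kernel `K` and collects the reward `r` at rate one. -/
noncomputable def hamiltonian (η : ℝ) (K : Kernel (X × Y) X) (r : X × Y → ℝ) (w : X → ℝ)
    (p : X × Y) : ℝ :=
  η * ∫ z, (w z - w p.1) ∂K p + r p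

theorem measurable_hamiltonian {η : ℝ} [IsSFiniteKernel K] (hr : Measurable r)
    {w : X → ℝ}
    (hw : StronglyMeasurable w) : Measurable (hamiltonian η K r w) := by
  have hdiff : StronglyMeasurable fun q : (X × Y) × X => w q.2 - w q.1.1 :=
    (hw.comp_measurable measurable_snd).sub
      (hw.comp_measurable (measurable_fst.comp measurable_fst))
  exact (hdiff.integral_kernel_prod_right'.measurable.const_mul η).add hr

theorem hamiltonian_closedLoop {η : ℝ} {w : X → ℝ} {α : X → Y}
    (hα : Measurable α) (y : X) :
    hamiltonian η K r w (y, α y) = η * jumpGenerator (closedLoop K hα) w y + r (y, α y) :=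
  rfl

variable [TopologicalSpace X] [BorelSpace X] {V w w' : X → ℝ}

theorem IsJumpFlow.nonpos_of_ae_le_jumpGenerator_sub [HasOuterApproxClosed X] {κ : Kernel X X}
    [IsMarkovKernel κ] {P : ℝ → Measure X} (h : IsJumpFlow η κ V x P) (hη : η ≠ 0)
    (hV_cont : Continuous V) (hV : ∀ y, 1 ≤ V y)
    (hV_lim : Tendsto (fun t => (∫ y, V y ∂P t) / t) atTop (𝓝 0))
    (hw : Continuous w) (hwV : ∃ M, ∀ y, |w y| ≤ M * V y)
    (hw' : Continuous w') (hw'V : ∃ M, ∀ y, |w' y| ≤ M * V y)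
    {μ : Measure X} (hxμ : Measure.dirac x ≪ μ) (hκμ : κ ∘ₘ μ ≪ μ) {δ : ℝ}
    (hδ : ∀ᵐ y ∂μ, δ ≤ η * (jumpGenerator κ w' y - jumpGenerator κ w y)) : δ ≤ 0 := by
  obtain ⟨Q, _, hQP, hQ⟩ := h.exists_forwardEquation hV
  obtain ⟨M, hM⟩ := hwV
  obtain ⟨M', hM'⟩ := hw'V
  refine nonpos_of_forall_mul_le (M := M' + M) (C := -(w' - w) x) hV_lim fun t ht => ?_
  have hV_int : Integrable V (Q t) := hQP t ht.le ▸ h.integrable_weight hV_cont hV ht.le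
  have hsub_le (y : X) : |(w' - w) y| ≤ (M' + M) * V y := by
    rw [add_mul]
    exact (abs_sub (w' y) (w y)).trans (add_le_add (hM' y) (hM y))
  have hsub_int : Integrable (w' - w) (Q t) := (hV_int.const_mul (M' + M)).mono'
    (hw'.sub hw).aestronglyMeasurable (Eventually.of_forall hsub_le)
  have hdrift : ∀ᵐ y ∂occupation Q t, δ ≤ η * jumpGenerator κ (w' - w) y := by
    filter_upwards [(hQ.occupation_absolutelyContinuous t hxμ hκμ).ae_le hδ,
      Measure.ae_integrable_of_integrable_comp (hQ.integrable_comp_occupation hη ht.le hV_int)]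
      with y hy hV_int_y
    rwa [jumpGenerator_sub
      ((hV_int_y.const_mul M').mono' hw'.aestronglyMeasurable (Eventually.of_forall hM'))
      ((hV_int_y.const_mul M).mono' hw.aestronglyMeasurable (Eventually.of_forall hM))]
  calc δ * t ≤ ∫ y, (w' - w) y ∂Q t - (w' - w) x :=
        hQ.mul_le_integral_sub hη ht.le (hw'.sub hw).stronglyMeasurable hsub_int hdrift
    _ ≤ (M' + M) * ∫ y, V y ∂P t + -(w' - w) x := by
        rw [← sub_eq_add_neg, ← hQP t ht.le, ← integral_const_mul]
        exact sub_le_sub_right (integral_mono hsub_int (hV_int.const_mul _) fun y =>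
          (le_abs_self _).trans (hsub_le y)) _

variable [PolishSpace X] [StandardBorelSpace Y] [IsMarkovKernel K]

theorem ergodicConstant_le (hη : η ≠ 0) (hr : Measurable r) (hV_cont : Continuous V)
    (hV : ∀ y, 1 ≤ V y)
    (hflow : ∀ (α : X → Y) (hα : Measurable α), ∃ P : ℝ → Measure X,
      IsJumpFlow η (closedLoop K hα) V x P ∧
      Tendsto (fun t => (∫ y, V y ∂P t) / t) atTop (𝓝 0))
    (hw : Continuous w) (hwV : ∃ M, ∀ y, |w y| ≤ M * V y)
    (hw' : Continuous w') (hw'V : ∃ M, ∀ y, |w' y| ≤ M * V y) {ρ ρ' : ℝ}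
    (hw_super : ∀ p, hamiltonian η K r w p ≤ ρ)
    (hw'_sub : ∀ y, ∀ c < ρ', ∃ a, c < hamiltonian η K r w' (y, a)) : ρ' ≤ ρ := by
  refine le_of_forall_lt_imp_le_of_dense fun c hc => ?_
  have : Nonempty Y := (hw'_sub x c hc).nonempty
  obtain ⟨α, hα, μ, hxμ, hκμ, hα_mem⟩ := exists_feedback_absolutelyContinuous K
    (measurableSet_lt measurable_const (measurable_hamiltonian hr hw'.stronglyMeasurable))
    (fun y => hw'_sub y c hc) (Measure.dirac x)
  obtain ⟨P, hP, hV_lim⟩ := hflow α hα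
  refine sub_nonpos.1 <| hP.nonpos_of_ae_le_jumpGenerator_sub hη hV_cont hV hV_lim hw hwV hw' hw'V
    hxμ hκμ ?_
  filter_upwards [hα_mem] with y (hy : c < hamiltonian η K r w' (y, α y))
  have hy_super := hw_super (y, α y)
  rw [hamiltonian_closedLoop hα] at hy hy_super
  linarith

theorem ergodicConstant_unique (hη : η ≠ 0) (hr : Measurable r) (hV_cont : Continuous V)
    (hV : ∀ y, 1 ≤ V y)
    (hflow : ∀ (α : X → Y) (hα : Measurable α), ∃ P : ℝ → Measure X,
      IsJumpFlow η (closedLoop K hα) V x P ∧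
      Tendsto (fun t => (∫ y, V y ∂P t) / t) atTop (𝓝 0))
    (hw : Continuous w) (hwV : ∃ M, ∀ y, |w y| ≤ M * V y)
    (hw' : Continuous w') (hw'V : ∃ M, ∀ y, |w' y| ≤ M * V y) {ρ ρ' : ℝ}
    (hρ : ∀ y, IsLUB (Set.range fun a => hamiltonian η K r w (y, a)) ρ)
    (hρ' : ∀ y, IsLUB (Set.range fun a => hamiltonian η K r w' (y, a)) ρ') : ρ = ρ' :=
  le_antisymm
    (ergodicConstant_le hη hr hV_cont hV hflow hw' hw'V hw hwV
      (fun p => (hρ' p.1).1 ⟨p.2, rfl⟩)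
      fun y _ hc => Set.exists_range_iff.1 ((lt_isLUB_iff (hρ y)).1 hc))
    (ergodicConstant_le hη hr hV_cont hV hflow hw hwV hw' hw'V
      (fun p => (hρ p.1).1 ⟨p.2, rfl⟩)
      fun y _ hc => Set.exists_range_iff.1 ((lt_isLUB_iff (hρ' y)).1 hc))

end Verification

section RandomMap

open ProbabilityTheory

variable {T Z X : Type*} [MeasurableSpace T] [MeasurableSpace Z] [MeasurableSpace X]
  {ν : Measure Z} [SFinite ν] {g : T × Z → X}

/-- The kernel sending `p` to the law of `g (p, e)`, where `e` has law `ν`. -/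
noncomputable def randomMap (ν : Measure Z) [SFinite ν] (g : T × Z → X) : Kernel T X :=
  (Kernel.id ×ₖ Kernel.const T ν).map g

theorem randomMap_apply (hg : Measurable g) (p : T) :
    randomMap ν g p = ν.map fun e => g (p, e) := by
  rw [randomMap, Kernel.map_apply _ hg, Kernel.prod_apply, Kernel.id_apply, Kernel.const_apply,
    Measure.dirac_prod, Measure.map_map hg measurable_prodMk_left]
  rfl

theorem isMarkovKernel_randomMap {ν : Measure Z} [IsProbabilityMeasure ν] (hg : Measurable g) :
    IsMarkovKernel (randomMap ν g) :=
  Kernel.IsMarkovKernel.map _ hg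

theorem integral_randomMap {E : Type*} [NormedAddCommGroup E] [NormedSpace ℝ E]
    (hg : Measurable g) {f : X → E} (hf : StronglyMeasurable f) (p : T) :
    ∫ x, f x ∂randomMap ν g p = ∫ e, f (g (p, e)) ∂ν := by
  rw [randomMap_apply hg]
  exact integral_map (hg.comp measurable_prodMk_left).aemeasurable hf.aestronglyMeasurable

end RandomMap

section ControlledLaw

open ProbabilityTheory

open scoped NNReal

variable {X Y : Type*} [MeasurableSpace X] [TopologicalSpace X] [OpensMeasurableSpace X]
  [MeasurableSpace Y]

theorem isJumpFlow_map_fst {η : ℝ≥0} {K : Kernel (X × Y) X} [IsSFiniteKernel K] {V : X → ℝ}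
    {x : X} {L : ℝ → Measure (X × Y)} [∀ t, IsProbabilityMeasure (L t)] {α : X → Y}
    (hα : Measurable α) (hL : ∀ t, ∀ᵐ p ∂L t, p.2 = α p.1)
    (hdynkin : ∀ w : X → ℝ, Continuous w → (∃ M, ∀ y, |w y| ≤ M * V y) → ∀ t, 0 ≤ t →
      ∫ p, w p.1 ∂L t = w x + ∫ s in 0..t, ∫ p, η * ∫ z, (w z - w p.1) ∂K p ∂L s) :
    IsJumpFlow η (closedLoop K hα) V x fun t => (L t).map Prod.fst where
  isProbabilityMeasure t := Measure.isProbabilityMeasure_map measurable_fst.aemeasurable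
  dynkin w hw hwV t ht := by
    rw [integral_map measurable_fst.aemeasurable hw.stronglyMeasurable.aestronglyMeasurable,
      hdynkin w hw hwV t ht, ← intervalIntegral.integral_const_mul]
    congr 2
    ext s
    rw [integral_const_mul, integral_map measurable_fst.aemeasurable
      (stronglyMeasurable_jumpGenerator hw.stronglyMeasurable).aestronglyMeasurable]
    congr 1
    refine integral_congr_ae ?_
    filter_upwards [hL s] with p hp
    rw [jumpGenerator, closedLoop_apply, ← hp]

theorem ergodicConstant_unique_of_law [PolishSpace X] [BorelSpace X] [StandardBorelSpace Y]
    {η : ℝ≥0} (hη : η ≠ 0) {K : Kernel (X × Y) X} [IsMarkovKernel K] {A : Set Y}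
    (hA : MeasurableSet A) {r : X × Y → ℝ} (hr : Measurable r) {V : X → ℝ}
    (hV_cont : Continuous V) (hV : ∀ y, 1 ≤ V y) {x : X} {𝒜 : Type*}
    {law : 𝒜 → ℝ → Measure (X × Y)} (hprob : ∀ c t, IsProbabilityMeasure (law c t))
    (hdynkin : ∀ w : X → ℝ, Continuous w → (∃ M, ∀ y, |w y| ≤ M * V y) → ∀ c t, 0 ≤ t →
      ∫ p, w p.1 ∂law c t = w x + ∫ s in 0..t, ∫ p, η * ∫ z, (w z - w p.1) ∂K p ∂law c s)
    (hfeedback : ∀ α : X → Y, Measurable α → (∀ y, α y ∈ A) →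
      ∃ c, ∀ t, ∀ᵐ p ∂law c t, p.2 = α p.1)
    (hmom : ∀ c, Tendsto (fun t => (∫ p, V p.1 ∂law c t) / t) atTop (𝓝 0))
    {w w' : X → ℝ} {ρ ρ' : ℝ} (hw : Continuous w) (hwV : ∃ M, ∀ y, |w y| ≤ M * V y)
    (hw' : Continuous w') (hw'V : ∃ M, ∀ y, |w' y| ≤ M * V y)
    (hρ : ∀ y, IsLUB ((fun a => hamiltonian η K r w (y, a)) '' A) ρ)
    (hρ' : ∀ y, IsLUB ((fun a => hamiltonian η K r w' (y, a)) '' A) ρ') : ρ = ρ' := by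
  have := hA.standardBorel
  let incl : X × A → X × Y := Prod.map id (↑)
  have hincl : Measurable incl := measurable_id.prodMap measurable_subtype_coe
  have hflow (α : X → A) (hα : Measurable α) : ∃ P : ℝ → Measure X,
      IsJumpFlow η (closedLoop (K.comap incl hincl) hα) V x P ∧
      Tendsto (fun t => (∫ y, V y ∂P t) / t) atTop (𝓝 0) := by
    obtain ⟨c, hc⟩ := hfeedback (fun y => α y) (by fun_prop) fun y => (α y).2
    refine ⟨fun t => (law c t).map Prod.fst,
      isJumpFlow_map_fst (measurable_subtype_coe.comp hα) hc fun w hw hwV => hdynkin w hw hwV c, ?_⟩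
    convert hmom c with t
    exact integral_map measurable_fst.aemeasurable hV_cont.stronglyMeasurable.aestronglyMeasurable
  simp only [Set.image_eq_range] at hρ hρ'
  exact ergodicConstant_unique (K := K.comap incl hincl) hη (hr.comp hincl) hV_cont hV hflow
    hw hwV hw' hw'V hρ hρ'

end ControlledLaw

theorem stmt_4_general {X Y Z : Type*} [NormedAddCommGroup X] [SecondCountableTopology X]
    [CompleteSpace X] [MeasurableSpace X] [BorelSpace X] [MeasurableSpace Y]
    [StandardBorelSpace Y] [MeasurableSpace Z] {η : ℝ} (hη : 0 < η) (ν : Measure Z)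
    [IsProbabilityMeasure ν] {A : Set Y} (hA : MeasurableSet A) {b : X → Y → Z → X}
    {r : X → Y → ℝ} (hb : Measurable fun q : X × Y × Z => b q.1 q.2.1 q.2.2)
    (hr : Measurable fun q : X × Y => r q.1 q.2) {x : X} {𝒜 : Type*}
    {law : 𝒜 → ℝ → Measure (X × Y)} (hprob : ∀ c t, IsProbabilityMeasure (law c t))
    (hDynkin : ∀ w : X → ℝ, Continuous w → (∃ M : ℝ, ∀ y, |w y| ≤ M * (1 + ‖y‖)) →
      ∀ c t, 0 ≤ t →
        ∫ p, w p.1 ∂law c t = w x + ∫ s in (0 : ℝ)..t,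
          ∫ p, η * ∫ e, (w (p.1 + b p.1 p.2 e) - w p.1) ∂ν ∂law c s)
    (hfeedback : ∀ ahat : X → Y, Measurable ahat → (∀ y, ahat y ∈ A) →
      ∃ c : 𝒜, ∀ t, ∀ᵐ p ∂law c t, p.2 = ahat p.1)
    (hmom : ∀ c, Tendsto (fun t : ℝ => (∫ p, ‖p.1‖ ∂law c t) / t) atTop (𝓝 0))
    {w w' : X → ℝ} {ρ ρ' : ℝ} (hw : Continuous w) (hw' : Continuous w')
    (hwlin : ∃ M : ℝ, ∀ y, |w y| ≤ M * (1 + ‖y‖)) (hw'lin : ∃ M : ℝ, ∀ y, |w' y| ≤ M * (1 + ‖y‖))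
    (hρ : ∀ y, IsLUB ((fun a => η * ∫ e, (w (y + b y a e) - w y) ∂ν + r y a) '' A) ρ)
    (hρ' : ∀ y, IsLUB ((fun a => η * ∫ e, (w' (y + b y a e) - w' y) ∂ν + r y a) '' A) ρ') :
    ρ = ρ' := by
  lift η to NNReal using hη.le
  let jump (q : (X × Y) × Z) : X := q.1.1 + b q.1.1 q.1.2 q.2
  have hjump : Measurable jump :=
    measurable_fst.fst.add (hb.comp MeasurableEquiv.prodAssoc.measurable)
  have : ProbabilityTheory.IsMarkovKernel (randomMap ν jump) := isMarkovKernel_randomMap hjump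
  have integral_jump {v : X → ℝ} (hv : Continuous v) (p : X × Y) :
      ∫ z, (v z - v p.1) ∂randomMap ν jump p = ∫ e, (v (p.1 + b p.1 p.2 e) - v p.1) ∂ν :=
    integral_randomMap hjump (hv.sub continuous_const).stronglyMeasurable p
  refine ergodicConstant_unique_of_law (V := fun y => 1 + ‖y‖) (K := randomMap ν jump)
    (r := fun p => r p.1 p.2) (x := x) (by simpa using hη.ne') hA hr (by fun_prop)
    (fun y => by simp) hprob (fun v hv hvV c t ht => ?_) hfeedback
    (fun c => tendsto_integral_one_add_div (fun p => norm_nonneg p.1) (hmom c))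
    hw hwlin hw' hw'lin (fun y => ?_) (fun y => ?_)
  · simpa only [integral_jump hv] using hDynkin v hv hvV c t ht
  · simpa only [hamiltonian, integral_jump hw] using hρ y
  · simpa only [hamiltonian, integral_jump hw'] using hρ' y

/-- Uniqueness of the ergodic constant for the pure-jump HJB equation
(Theorem 2.1 / Lemma A.4 of the paper).  The controlled pure-jump dynamics are
encoded through the time-marginal laws `law c x t` of `(X_t^{x,c}, α_t)` for each
admissible control `c`: they are probability measures supported on controls with
values in the compact set `A`, start from `x`, satisfy the Dynkin formula
associated with the jump generator `w ↦ η ∫ (w(· + b(·,a,e)) - w) ν(de)` against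
every continuous function of linear growth, admit Markov feedback controls, and
have sublinear first moments `E[|X_t|]/t → 0`.  If `(wt, rhot)` and `(wt', rhot')`
are two continuous linear-growth solutions of the ergodic equation
`ρ = sup_{a ∈ A} { η ∫ [w(x + b(x,a,e)) - w(x)] ν(de) + r(x,a) }`, then
`rhot = rhot'`. -/
theorem stmt_4 {d d' m : ℕ} (η : ℝ) (hη : 0 < η)
    (ν : Measure (EuclideanSpace ℝ (Fin d'))) [IsProbabilityMeasure ν]
    (A : Set (EuclideanSpace ℝ (Fin m))) (hA : IsCompact A)
    (b : EuclideanSpace ℝ (Fin d) → EuclideanSpace ℝ (Fin m) →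
      EuclideanSpace ℝ (Fin d') → EuclideanSpace ℝ (Fin d))
    (r : EuclideanSpace ℝ (Fin d) → EuclideanSpace ℝ (Fin m) → ℝ)
    (hb : Measurable fun q : EuclideanSpace ℝ (Fin d) × EuclideanSpace ℝ (Fin m) ×
      EuclideanSpace ℝ (Fin d') => b q.1 q.2.1 q.2.2)
    (hr : Measurable fun q : EuclideanSpace ℝ (Fin d) × EuclideanSpace ℝ (Fin m) =>
      r q.1 q.2)
    -- the admissible controls and the laws of `(X_t^{x,α}, α_t)`
    (𝒜 : Type) (law : 𝒜 → EuclideanSpace ℝ (Fin d) → ℝ →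
      Measure (EuclideanSpace ℝ (Fin d) × EuclideanSpace ℝ (Fin m)))
    (hprob : ∀ c x t, IsProbabilityMeasure (law c x t))
    (hsupp : ∀ c x t, ∀ᵐ p ∂ law c x t, p.2 ∈ A)
    (hinit : ∀ c x, Measure.map Prod.fst (law c x 0) = Measure.dirac x)
    -- Dynkin formula for continuous functions of linear growth
    (hDynkin : ∀ (w : EuclideanSpace ℝ (Fin d) → ℝ), Continuous w →
      (∃ M : ℝ, ∀ y, |w y| ≤ M * (1 + ‖y‖)) →
      ∀ c x t, 0 ≤ t →
        (∫ p, w p.1 ∂ law c x t) = w x +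
          ∫ s in (0:ℝ)..t,
            ∫ p, η * (∫ e, (w (p.1 + b p.1 p.2 e) - w p.1) ∂ν) ∂ law c x s)
    -- Markov feedback controls exist
    (hfeedback : ∀ ahat : EuclideanSpace ℝ (Fin d) → EuclideanSpace ℝ (Fin m),
      Measurable ahat → (∀ y, ahat y ∈ A) →
      ∃ c : 𝒜, ∀ x t, ∀ᵐ p ∂ law c x t, p.2 = ahat p.1)
    -- sublinear growth of first moments, for every admissible control
    (hmom : ∀ c x,
      Tendsto (fun t : ℝ => (∫ p, ‖p.1‖ ∂ law c x t) / t) atTop (𝓝 0))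
    -- two continuous linear-growth solutions of the ergodic equation
    (wt wt' : EuclideanSpace ℝ (Fin d) → ℝ) (rhot rhot' : ℝ)
    (hwtc : Continuous wt) (hwt'c : Continuous wt')
    (hwtlin : ∃ M : ℝ, ∀ y, |wt y| ≤ M * (1 + ‖y‖))
    (hwt'lin : ∃ M : ℝ, ∀ y, |wt' y| ≤ M * (1 + ‖y‖))
    (heq : ∀ x, IsLUB
      ((fun a => η * (∫ e, (wt (x + b x a e) - wt x) ∂ν) + r x a) '' A) rhot)
    (heq' : ∀ x, IsLUB
      ((fun a => η * (∫ e, (wt' (x + b x a e) - wt' x) ∂ν) + r x a) '' A) rhot') :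
    rhot = rhot' :=
  stmt_4_general hη ν hA.measurableSet hb hr (fun c => hprob c 0)
    (fun w hw hwlin c => hDynkin w hw hwlin c 0)
    (fun ahat hahat hA => (hfeedback ahat hahat hA).imp fun _ hc => hc 0) (fun c => hmom c 0)
    hwtc hwt'c hwtlin hwt'lin heq heq'
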